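/- arXiv:1809.02946 — 2 statements merged into one kernel-verified Lean document; each statement's English description precedes it below -/
import Mathlib

section
/- Let M, w, s, c be real numbers with M > 0, w > 0, s > 0, c > 0, let K ≥ 2 be a natural number, and let p₁ ≥ 0. Define a(T) = (√2·T·w·s + 1)/(√M − √2·T·w·s) and b(T) = (2√2·T·w·c)/(√M − √2·T·w·s), and define recursively p_{i+1}(T) = a(T)·p_i(T) + b(T) for i = 1, …, K−1 with p₁(T) = p₁. Then the function T ↦ Σ_{i=1}^{K} p_i(T) is strictly increasing on the open interval (0, √(M/2)/(w·s)). -/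
/-!
Fractional linear functions of positive determinant increase wherever their denominator is
positive, so on `(0, √(M/2)/(w s))` both `a` and `b` are positive and strictly increasing. The
recursion `p ↦ a p + b` preserves nonnegativity and monotonicity in the parameter, and the strictly
increasing `b` makes every term after the first strictly increasing.
-/

section FractionalLinear

variable {k : Type*} [Field k] [LinearOrder k] [IsStrictOrderedRing k]

theorem strictMonoOn_mul_add_div_sub_mul {α β γ δ : k} (hdet : 0 < α * δ + β * γ) :
    StrictMonoOn (fun t ↦ (α * t + β) / (δ - γ * t)) {t | γ * t < δ} := by
  intro x hx y hy hxy
  have cross_diff : (α * y + β) * (δ - γ * x) - (α * x + β) * (δ - γ * y)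
      = (α * δ + β * γ) * (y - x) := by ring
  have cross_diff_pos := mul_pos hdet (sub_pos.2 hxy)
  exact (div_lt_div_iff₀ (sub_pos.2 hx) (sub_pos.2 hy)).2
    (sub_pos.1 (cross_diff ▸ cross_diff_pos))

end FractionalLinear

section AffineRecursion

variable {R : Type*} [Semiring R] [PartialOrder R] {m n : ℕ}

theorem nonneg_of_affine_rec [IsOrderedRing R] {a b : R} {u : ℕ → R} (ha : 0 ≤ a) (hb : 0 ≤ b)
    (hinit : 0 ≤ u m) (hrec : ∀ i ∈ Set.Ico m n, u (i + 1) = a * u i + b) :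
    ∀ i ∈ Set.Icc m n, 0 ≤ u i := by
  rintro i ⟨hmi, hin⟩
  induction i, hmi using Nat.le_induction with
  | base => exact hinit
  | succ i hmi ih =>
    rw [hrec i ⟨hmi, hin⟩]
    exact add_nonneg (mul_nonneg ha (ih (Nat.le_of_succ_le hin))) hb

theorem monotoneOn_of_affine_rec [IsOrderedRing R] {ι : Type*} [Preorder ι] {S : Set ι}
    {a b : ι → R} {p : ι → ℕ → R} (ha : MonotoneOn a S) (hb : MonotoneOn b S)
    (ha₀ : ∀ T ∈ S, 0 ≤ a T) (hb₀ : ∀ T ∈ S, 0 ≤ b T)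
    (hinit : MonotoneOn (p · m) S) (hinit₀ : ∀ T ∈ S, 0 ≤ p T m)
    (hrec : ∀ T ∈ S, ∀ i ∈ Set.Ico m n, p T (i + 1) = a T * p T i + b T) :
    ∀ i ∈ Set.Icc m n, MonotoneOn (p · i) S := by
  rintro i ⟨hmi, hin⟩
  induction i, hmi using Nat.le_induction with
  | base => exact hinit
  | succ i hmi ih =>
    have hin' : i ≤ n := Nat.le_of_succ_le hin
    have hp₀ : ∀ T ∈ S, 0 ≤ p T i := fun T hT ↦
      nonneg_of_affine_rec (ha₀ T hT) (hb₀ T hT) (hinit₀ T hT) (hrec T hT) i ⟨hmi, hin'⟩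
    exact ((ha.mul (ih hin') ha₀ hp₀).add hb).congr fun T hT ↦ (hrec T hT i ⟨hmi, hin⟩).symm

variable {ι : Type*} [PartialOrder ι] {S : Set ι} {a b : ι → R} {p : ι → ℕ → R}

theorem strictMonoOn_succ_of_affine_rec [IsStrictOrderedRing R] (ha : MonotoneOn a S)
    (hb : StrictMonoOn b S) (ha₀ : ∀ T ∈ S, 0 ≤ a T) (hb₀ : ∀ T ∈ S, 0 ≤ b T)
    (hinit : MonotoneOn (p · m) S) (hinit₀ : ∀ T ∈ S, 0 ≤ p T m)
    (hrec : ∀ T ∈ S, ∀ i ∈ Set.Ico m n, p T (i + 1) = a T * p T i + b T) :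
    ∀ i ∈ Set.Ico m n, StrictMonoOn (p · (i + 1)) S := by
  intro i hi
  have hi' : i ∈ Set.Icc m n := Set.Ico_subset_Icc_self hi
  have hp : MonotoneOn (p · i) S :=
    monotoneOn_of_affine_rec ha hb.monotoneOn ha₀ hb₀ hinit hinit₀ hrec i hi'
  have hp₀ : ∀ T ∈ S, 0 ≤ p T i := fun T hT ↦
    nonneg_of_affine_rec (ha₀ T hT) (hb₀ T hT) (hinit₀ T hT) (hrec T hT) i hi'
  exact ((ha.mul hp ha₀ hp₀).add_strictMono hb).congr fun T hT ↦ (hrec T hT i hi).symm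

theorem strictMonoOn_sum_Icc_of_affine_rec [IsStrictOrderedRing R] (hmn : m < n)
    (ha : MonotoneOn a S) (hb : StrictMonoOn b S)
    (ha₀ : ∀ T ∈ S, 0 ≤ a T) (hb₀ : ∀ T ∈ S, 0 ≤ b T)
    (hinit : MonotoneOn (p · m) S) (hinit₀ : ∀ T ∈ S, 0 ≤ p T m)
    (hrec : ∀ T ∈ S, ∀ i ∈ Set.Ico m n, p T (i + 1) = a T * p T i + b T) :
    StrictMonoOn (fun T ↦ ∑ i ∈ Finset.Icc m n, p T i) S := by
  intro x hx y hy hxy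
  refine Finset.sum_lt_sum (fun i hi ↦ ?_)
    ⟨m + 1, Finset.mem_Icc.2 ⟨m.le_succ, hmn⟩, ?_⟩
  · exact monotoneOn_of_affine_rec ha hb.monotoneOn ha₀ hb₀ hinit hinit₀ hrec i
      (Finset.mem_Icc.1 hi) hx hy hxy.le
  · exact strictMonoOn_succ_of_affine_rec ha hb ha₀ hb₀ hinit hinit₀ hrec m
      ⟨le_rfl, hmn⟩ hx hy hxy

end AffineRecursion

section Coefficients

variable {M w s : ℝ}

theorem sqrt_two_mul_lt_sqrt_of_lt_div {T : ℝ} (hw : 0 < w) (hs : 0 < s)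
    (hT : T < √(M / 2) / (w * s)) : √2 * T * w * s < √M :=
  calc √2 * T * w * s = √2 * (T * (w * s)) := by ring
    _ < √2 * √(M / 2) := by gcongr; exact (lt_div_iff₀ (mul_pos hw hs)).1 hT
    _ = √M := by rw [← Real.sqrt_mul zero_le_two, mul_div_cancel₀ M two_ne_zero]

theorem strictMonoOn_recursion_slope (hw : 0 < w) (hs : 0 < s) :
    StrictMonoOn (fun T ↦ (√2 * T * w * s + 1) / (√M - √2 * T * w * s))
      {T | √2 * T * w * s < √M} := by
  have hden (T : ℝ) : √2 * T * w * s = √2 * w * s * T := by ring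
  have hdet : 0 < √2 * w * s * √M + 1 * (√2 * w * s) := by positivity
  simpa only [hden] using strictMonoOn_mul_add_div_sub_mul hdet

theorem strictMonoOn_recursion_intercept {c : ℝ} (hM : 0 < M) (hw : 0 < w) (hc : 0 < c) :
    StrictMonoOn (fun T ↦ (2 * √2 * T * w * c) / (√M - √2 * T * w * s))
      {T | √2 * T * w * s < √M} := by
  have hden (T : ℝ) : √2 * T * w * s = √2 * w * s * T := by ring
  have hnum (T : ℝ) : 2 * √2 * T * w * c = 2 * √2 * w * c * T + 0 := by ring
  have hdet : 0 < 2 * √2 * w * c * √M + 0 * (√2 * w * s) := by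
    rw [zero_mul, add_zero]
    positivity
  simpa only [hden, hnum] using strictMonoOn_mul_add_div_sub_mul hdet

end Coefficients

/-- Proposition 3: the total constellation power `∑_{i=1}^K p_i(T)`, generated by the
recursion `p_{i+1}(T) = a(T) p_i(T) + b(T)` with `p₁(T) = p₁`, is strictly increasing in
`T` on `(0, √(M/2)/(w s))`. -/
theorem total_power_strictMono (M w s c : ℝ)
    (hM : 0 < M) (hw : 0 < w) (hs : 0 < s) (hc : 0 < c)
    (K : ℕ) (hK : 2 ≤ K) (p₁ : ℝ) (hp₁ : 0 ≤ p₁)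
    (a b : ℝ → ℝ)
    (ha : a = fun T =>
      (Real.sqrt 2 * T * w * s + 1) / (Real.sqrt M - Real.sqrt 2 * T * w * s))
    (hb : b = fun T =>
      (2 * Real.sqrt 2 * T * w * c) / (Real.sqrt M - Real.sqrt 2 * T * w * s))
    (p : ℝ → ℕ → ℝ)
    (hpinit : ∀ T, p T 1 = p₁)
    (hprec : ∀ T, ∀ i, 1 ≤ i → i ≤ K - 1 → p T (i + 1) = a T * p T i + b T) :
    StrictMonoOn (fun T => ∑ i ∈ Finset.Icc 1 K, p T i)
      (Set.Ioo (0 : ℝ) (Real.sqrt (M / 2) / (w * s))) := by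
  subst ha hb
  have hsub : Set.Ioo 0 (√(M / 2) / (w * s)) ⊆ {T | √2 * T * w * s < √M} :=
    fun T hT ↦ sqrt_two_mul_lt_sqrt_of_lt_div hw hs hT.2
  have hslope := (strictMonoOn_recursion_slope hw hs).mono hsub
  have hintercept := (strictMonoOn_recursion_intercept hM hw hc).mono hsub
  have hinit : MonotoneOn (p · 1) (Set.Ioo 0 (√(M / 2) / (w * s))) := by
    simp only [hpinit, monotoneOn_const]
  refine strictMonoOn_sum_Icc_of_affine_rec hK hslope.monotoneOn hintercept ?_ ?_ hinit
    (fun T _ ↦ (hpinit T).symm ▸ hp₁)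
    (fun T _ i hi ↦ hprec T i hi.1 (Nat.le_sub_one_of_lt hi.2))
  all_goals
    intro T hT
    have hT₀ : 0 < T := hT.1
    exact div_nonneg (by positivity) (sub_nonneg.2 (hsub hT).le)
end

section
/- Let K ≥ 2 be a natural number and c > 0 a real constant, and define P(M) = 1 − ((K−1)·erf(c·√M) + 1)/K for M > 0. Then P(M) · (K/(K−1)) · √π · c·√M · exp(c²·M) tends to 1 as M → +∞. Consequently, for every δ > 0 there is M₀ such that for all M ≥ M₀, log₁₀ P(M) lies within δ + (1/2)·log₁₀ M of −c²·M·log₁₀(e) + log₁₀((K−1)/(√π·K·c)). -/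
open Filter

/-- The error function `erf x = (2/√π) ∫_0^x exp(-t²) dt`. -/
noncomputable def erf (x : ℝ) : ℝ :=
  (2 / Real.sqrt Real.pi) * ∫ t in (0 : ℝ)..x, Real.exp (-t ^ 2)

/-!
Writing `1 - erf x` as a Gaussian tail integral, l'Hôpital's rule compares it with
`exp (-x²) / (√π x)`: the derivatives of the two functions differ by the factor
`1 + 1 / (2 x²) → 1`. The error probability is `((K - 1) / K) (1 - erf (c √M))`, and since
equivalent nonvanishing functions have logarithms whose difference tends to `0`, the logarithmic
estimate follows by expanding the logarithm of the leading term.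
-/

open Asymptotics MeasureTheory Set
open scoped Topology

section TailIntegral

theorem hasDerivAt_integral_Ioi {E : Type*} [NormedAddCommGroup E] [NormedSpace ℝ E]
    [CompleteSpace E] {f : ℝ → E} {a x : ℝ} (hf : IntegrableOn f (Ioi a)) (hax : a < x)
    (hfx : ContinuousAt f x) :
    HasDerivAt (fun u => ∫ t in Ioi u, f t) (-f x) x := by
  have hmeas : StronglyMeasurableAtFilter f (𝓝 x) :=
    ⟨Ioi a, Ioi_mem_nhds hax, hf.aestronglyMeasurable⟩
  have hint : IntervalIntegrable f volume a x :=
    (intervalIntegrable_iff_integrableOn_Ioc_of_le hax.le).2 (hf.mono_set Ioc_subset_Ioi_self)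
  refine ((intervalIntegral.integral_hasDerivAt_right hint hmeas hfx).const_sub
    (∫ t in Ioi a, f t)).congr_of_eventuallyEq ?_
  filter_upwards [Ioi_mem_nhds hax] with u hu
  rw [← intervalIntegral.integral_Ioi_sub_Ioi hf (le_of_lt hu), sub_sub_cancel]

theorem isEquivalent_integral_Ioi {f g g' : ℝ → ℝ} {a : ℝ} (hf : IntegrableOn f (Ioi a))
    (hfc : ∀ᶠ x in atTop, ContinuousAt f x) (hg : ∀ᶠ x in atTop, HasDerivAt g (-g' x) x)
    (hg' : ∀ᶠ x in atTop, g' x ≠ 0) (hg₀ : Tendsto g atTop (𝓝 0)) (hfg : f ~[atTop] g') :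
    (fun x => ∫ t in Ioi x, f t) ~[atTop] g := by
  have htail : ∀ᶠ x in atTop, HasDerivAt (fun u => ∫ t in Ioi u, f t) (-f x) x := by
    filter_upwards [hfc, eventually_gt_atTop a] with x hx hax
    exact hasDerivAt_integral_Ioi hf hax hx
  refine isEquivalent_of_tendsto_one (HasDerivAt.lhopital_zero_atTop htail hg
    (hg'.mono fun _ => neg_ne_zero.2) (tendsto_integral_Ioi_zero tendsto_id) hg₀ ?_)
  simpa only [neg_div_neg_eq] using! (isEquivalent_iff_tendsto_one hg').1 hfg

end TailIntegral

section GaussianTail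

theorem hasDerivAt_exp_neg_mul_sq_div {b x : ℝ} (hb : b ≠ 0) (hx : x ≠ 0) :
    HasDerivAt (fun x => Real.exp (-b * x ^ 2) / (2 * b * x))
      (-(Real.exp (-b * x ^ 2) * (1 + (2 * b * x ^ 2)⁻¹))) x := by
  have hnum : HasDerivAt (fun x => Real.exp (-b * x ^ 2))
      (Real.exp (-b * x ^ 2) * (-b * (2 * x))) x := by
    simpa using ((hasDerivAt_pow 2 x).const_mul (-b)).exp
  have hden : HasDerivAt (fun x => 2 * b * x) (2 * b) x := by
    simpa using (hasDerivAt_id x).const_mul (2 * b)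
  refine (hnum.fun_div hden (by positivity)).congr_deriv ?_
  field_simp
  ring

theorem tendsto_exp_neg_mul_sq_atTop {b : ℝ} (hb : 0 < b) :
    Tendsto (fun x : ℝ => Real.exp (-b * x ^ 2)) atTop (𝓝 0) :=
  Real.tendsto_exp_atBot.comp
    ((tendsto_pow_atTop two_ne_zero).const_mul_atTop_of_neg (neg_neg_of_pos hb))

theorem integral_Ioi_exp_neg_mul_sq_isEquivalent {b : ℝ} (hb : 0 < b) :
    (fun x => ∫ t in Ioi x, Real.exp (-b * t ^ 2)) ~[atTop]
      fun x => Real.exp (-b * x ^ 2) / (2 * b * x) := by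
  have hcorrection : Tendsto (fun x : ℝ => 1 + (2 * b * x ^ 2)⁻¹) atTop (𝓝 1) := by
    have hsq : Tendsto (fun x : ℝ => 2 * b * x ^ 2) atTop atTop :=
      (tendsto_pow_atTop two_ne_zero).const_mul_atTop (by positivity)
    simpa using hsq.inv_tendsto_atTop.const_add 1
  have hlinear : Tendsto (fun x : ℝ => 2 * b * x) atTop atTop :=
    tendsto_id.const_mul_atTop (by positivity)
  refine isEquivalent_integral_Ioi (a := 0)
    (g' := fun x => Real.exp (-b * x ^ 2) * (1 + (2 * b * x ^ 2)⁻¹))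
    (integrable_exp_neg_mul_sq hb).integrableOn
    (.of_forall fun x => by fun_prop) ?_ (.of_forall fun x => by positivity)
    ((tendsto_exp_neg_mul_sq_atTop hb).div_atTop hlinear) ?_
  · filter_upwards [eventually_ne_atTop 0] with x hx
    exact hasDerivAt_exp_neg_mul_sq_div hb.ne' hx
  · simpa only [Pi.mul_def, Function.const_apply, mul_one] using
      (IsEquivalent.refl (u := fun x => Real.exp (-b * x ^ 2))).mul
      ((isEquivalent_const_iff_tendsto one_ne_zero).2 hcorrection).symm

end GaussianTail

section Erf

theorem one_sub_erf_eq_integral_Ioi (x : ℝ) :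
    1 - erf x = 2 / √Real.pi * ∫ t in Ioi x, Real.exp (-t ^ 2) := by
  have hint : Integrable (fun t : ℝ => Real.exp (-t ^ 2)) := by
    simpa using integrable_exp_neg_mul_sq one_pos
  have htotal : ∫ t in Ioi (0 : ℝ), Real.exp (-t ^ 2) = √Real.pi / 2 := by
    simpa using integral_gaussian_Ioi 1
  rw [erf, ← intervalIntegral.integral_Ioi_sub_Ioi' hint.integrableOn hint.integrableOn, htotal]
  field

theorem one_sub_erf_isEquivalent :
    (fun x => 1 - erf x) ~[atTop] fun x => Real.exp (-x ^ 2) / (√Real.pi * x) := by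
  have htail := (IsEquivalent.refl (u := fun _ : ℝ => 2 / √Real.pi)).mul
    (integral_Ioi_exp_neg_mul_sq_isEquivalent one_pos)
  refine (htail.congr_left (.of_forall fun x => ?_)).congr_right (.of_forall fun x => ?_)
  · simp [one_sub_erf_eq_integral_Ioi]
  · simp only [Pi.mul_apply]
    field_simp

theorem tendsto_one_sub_erf_mul_exp_sq :
    Tendsto (fun x => (1 - erf x) * √Real.pi * x * Real.exp (x ^ 2)) atTop (𝓝 1) := by
  have hne : ∀ᶠ x in atTop, Real.exp (-x ^ 2) / (√Real.pi * x) ≠ 0 := by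
    filter_upwards [eventually_gt_atTop 0] with x hx
    positivity
  refine ((isEquivalent_iff_tendsto_one hne).1 one_sub_erf_isEquivalent).congr fun x => ?_
  rw [Pi.div_apply, Real.exp_neg]
  field

theorem tendsto_one_sub_erf_sqrt_mul_exp {c : ℝ} (hc : 0 < c) :
    Tendsto (fun M => (1 - erf (c * √M)) * √Real.pi * (c * √M) * Real.exp (c ^ 2 * M))
      atTop (𝓝 1) := by
  refine (tendsto_one_sub_erf_mul_exp_sq.comp
    (Real.tendsto_sqrt_atTop.const_mul_atTop hc)).congr' ?_
  filter_upwards [eventually_ge_atTop 0] with M hM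
  rw [Function.comp_apply, mul_pow, Real.sq_sqrt hM]

theorem mul_one_sub_erf_sqrt_isEquivalent (a : ℝ) {c : ℝ} (hc : 0 < c) :
    (fun M => a * (1 - erf (c * √M))) ~[atTop]
      fun M => a * (Real.exp (-(c ^ 2 * M)) / (√Real.pi * c * √M)) := by
  have hcomp := (IsEquivalent.refl (u := fun _ : ℝ => a)).mul (one_sub_erf_isEquivalent.comp_tendsto
    (Real.tendsto_sqrt_atTop.const_mul_atTop hc))
  refine hcomp.congr_right ?_
  filter_upwards [eventually_ge_atTop 0] with M hM
  simp [mul_pow, mul_assoc, Real.sq_sqrt hM]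

end Erf

section Logarithm

theorem tendsto_logb_sub_logb_of_isEquivalent {α : Type*} {l : Filter α} {u v : α → ℝ} (b : ℝ)
    (huv : u ~[l] v) (hv : ∀ᶠ x in l, v x ≠ 0) :
    Tendsto (fun x => Real.logb b (u x) - Real.logb b (v x)) l (𝓝 0) := by
  have hratio : Tendsto (u / v) l (𝓝 1) := (isEquivalent_iff_tendsto_one hv).1 huv
  have hlog : Tendsto (fun x => Real.logb b ((u / v) x)) l (𝓝 0) := by
    simpa using hratio.logb (b := b) one_ne_zero
  refine hlog.congr' ?_
  filter_upwards [hv, hratio.eventually_ne one_ne_zero] with x hvx hx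
  exact Real.logb_div (div_ne_zero_iff.1 hx).1 hvx

theorem logb_mul_exp_neg_div_sqrt (b : ℝ) {a s M : ℝ} (r : ℝ) (ha : a ≠ 0) (hs : s ≠ 0)
    (hM : 0 < M) :
    Real.logb b (a * (Real.exp (-r) / (s * √M))) =
      -r * Real.logb b (Real.exp 1) + Real.logb b (a / s) - 1 / 2 * Real.logb b M := by
  have hsqrt : Real.logb b √M = 1 / 2 * Real.logb b M := by
    rw [Real.sqrt_eq_rpow, Real.logb_rpow_eq_mul_logb_of_pos hM]
  have hexp : Real.logb b (Real.exp (-r)) = -r * Real.logb b (Real.exp 1) := by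
    rw [← Real.exp_one_rpow, Real.logb_rpow_eq_mul_logb_of_pos (Real.exp_pos 1)]
  have hfactor : a * (Real.exp (-r) / (s * √M)) = Real.exp (-r) * (a / s) / √M := by
    field
  rw [hfactor, Real.logb_div (by positivity) (by positivity),
    Real.logb_mul (by positivity) (by positivity), hexp, hsqrt]

theorem tendsto_logb_mul_one_sub_erf_sqrt (b : ℝ) {a c : ℝ} (ha : a ≠ 0) (hc : 0 < c) :
    Tendsto (fun M => Real.logb b (a * (1 - erf (c * √M))) -
      (-(c ^ 2 * M) * Real.logb b (Real.exp 1) + Real.logb b (a / (√Real.pi * c))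
        - 1 / 2 * Real.logb b M)) atTop (𝓝 0) := by
  have hne : ∀ᶠ M in atTop, a * (Real.exp (-(c ^ 2 * M)) / (√Real.pi * c * √M)) ≠ 0 := by
    filter_upwards [eventually_gt_atTop 0] with M hM
    positivity
  refine (tendsto_logb_sub_logb_of_isEquivalent b
    (mul_one_sub_erf_sqrt_isEquivalent a hc) hne).congr' ?_
  filter_upwards [eventually_gt_atTop 0] with M hM
  rw [logb_mul_exp_neg_div_sqrt b _ ha (by positivity) hM]

theorem eventually_abs_logb_mul_one_sub_erf_sqrt_sub_le {a b c δ : ℝ} (hb : 1 < b) (ha : a ≠ 0)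
    (hc : 0 < c) (hδ : 0 < δ) :
    ∀ᶠ M in atTop, |Real.logb b (a * (1 - erf (c * √M))) -
      (-(c ^ 2 * M) * Real.logb b (Real.exp 1) + Real.logb b (a / (√Real.pi * c)))|
        ≤ δ + 1 / 2 * Real.logb b M := by
  filter_upwards [Metric.tendsto_nhds.1 (tendsto_logb_mul_one_sub_erf_sqrt b ha hc) δ hδ,
    eventually_ge_atTop 1] with M hM hM₁
  have hlogM : 0 ≤ Real.logb b M := Real.logb_nonneg hb hM₁
  rw [Real.dist_0_eq_abs, abs_lt] at hM
  rw [abs_le]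
  constructor <;> linarith

end Logarithm

theorem ser_opt_asymptotics_general (K : ℝ) (hK : 1 < K) (c : ℝ) (hc : 0 < c) (b : ℝ) (hb : 1 < b)
    (P : ℝ → ℝ) (hP : P = fun M => 1 - ((K - 1) * erf (c * √M) + 1) / K) :
    Tendsto (fun M : ℝ => P M * (K / (K - 1)) * √Real.pi * (c * √M) * Real.exp (c ^ 2 * M))
        atTop (𝓝 1) ∧
    ∀ δ > (0 : ℝ), ∃ M₀ : ℝ, ∀ M ≥ M₀,
      |Real.logb b (P M) -
          (-(c ^ 2 * M) * Real.logb b (Real.exp 1)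
            + Real.logb b ((K - 1) / (√Real.pi * K * c)))|
        ≤ δ + (1 / 2) * Real.logb b M := by
  have hK₀ : 0 < K := by linarith
  have hK₁ : 0 < K - 1 := by linarith
  have hP' : P = fun M => (K - 1) / K * (1 - erf (c * √M)) := by
    rw [hP]
    funext M
    field
  constructor
  · refine (tendsto_one_sub_erf_sqrt_mul_exp hc).congr fun M => ?_
    rw [hP']
    field
  · intro δ hδ
    have hconst : (K - 1) / (√Real.pi * K * c) = (K - 1) / K / (√Real.pi * c) := by field
    rw [hP', hconst]
    exact eventually_atTop.1 (eventually_abs_logb_mul_one_sub_erf_sqrt_sub_le hb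
      (div_ne_zero hK₁.ne' hK₀.ne') hc hδ)

/-- The asymptotics of `P_{e,opt}(M) = 1 - ((K-1) erf(c √M) + 1)/K` as the number of
antennas `M → ∞`: `P(M) (K/(K-1)) √π c √M exp(c² M) → 1`, and consequently
`log₁₀ P(M)` is within `δ + (1/2) log₁₀ M` of
`-c² M log₁₀ e + log₁₀((K-1)/(√π K c))` for all large `M`. -/
theorem ser_opt_asymptotics (K : ℕ) (hK : 2 ≤ K) (c : ℝ) (hc : 0 < c)
    (P : ℝ → ℝ)
    (hP : P = fun M => 1 - (((K : ℝ) - 1) * erf (c * Real.sqrt M) + 1) / K) :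
    Tendsto (fun M : ℝ => P M * ((K : ℝ) / ((K : ℝ) - 1)) * Real.sqrt Real.pi
        * (c * Real.sqrt M) * Real.exp (c ^ 2 * M)) atTop (nhds 1) ∧
    ∀ δ > (0 : ℝ), ∃ M₀ : ℝ, ∀ M ≥ M₀,
      |Real.logb 10 (P M) -
          (-(c ^ 2 * M) * Real.logb 10 (Real.exp 1)
            + Real.logb 10 (((K : ℝ) - 1) / (Real.sqrt Real.pi * (K : ℝ) * c)))|
        ≤ δ + (1 / 2) * Real.logb 10 M :=
  ser_opt_asymptotics_general K (Nat.one_lt_cast.2 hK) c hc 10 (by norm_num) P hP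
end
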